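/- Let I ⊆ ℝ be an open interval and f : ℝ → ℝ be continuous on I. Suppose f is specularly differentiable at every point of I, and the function f^S is itself specularly differentiable at every point of I (i.e., the second order specular derivative f^SS(x) = (f^S)^S(x) exists for all x ∈ I). Then f^S is continuous on I. -/

import Mathlib

open Filter Topology Set

/-- The combination function `A(α,β)` from the paper: the slope of the specular
tangent determined by one-sided slopes `α` (right) and `β` (left). -/
noncomputable def specA (α β : ℝ) : ℝ :=
  if α + β = 0 then 0
  else (α * β - 1 + Real.sqrt ((α ^ 2 + 1) * (β ^ 2 + 1))) / (α + β)

/-- `HasSpecData f x₀ L α β` means: the left and right limits of `f` at `x₀` both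
exist and are equal to `L`, the right specular derivative of `f` at `x₀` is `α`,
and the left specular derivative of `f` at `x₀` is `β`. -/
def HasSpecData (f : ℝ → ℝ) (x₀ L α β : ℝ) : Prop :=
  Tendsto f (𝓝[<] x₀) (𝓝 L) ∧ Tendsto f (𝓝[>] x₀) (𝓝 L) ∧
    Tendsto (fun x => (f x - L) / (x - x₀)) (𝓝[>] x₀) (𝓝 α) ∧
    Tendsto (fun x => (f x - L) / (x - x₀)) (𝓝[<] x₀) (𝓝 β)

/-- `f` is specularly differentiable at `x₀`. -/
def SpecDifferentiableAt (f : ℝ → ℝ) (x₀ : ℝ) : Prop :=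
  ∃ L α β, HasSpecData f x₀ L α β

/-- `f` is specularly differentiable at `x₀` with specular derivative `d`. -/
def HasSpecDerivAt (f : ℝ → ℝ) (x₀ d : ℝ) : Prop :=
  ∃ L α β, HasSpecData f x₀ L α β ∧ d = specA α β

/-- One-sided derivatives at a point, with the value of `f` used as the limit. -/
def SpecOneSided (f : ℝ → ℝ) (x α β : ℝ) : Prop :=
  Tendsto (fun y => (f y - f x) / (y - x)) (𝓝[>] x) (𝓝 α) ∧
    Tendsto (fun y => (f y - f x) / (y - x)) (𝓝[<] x) (𝓝 β)

theorem specA_comm (α β : ℝ) : specA α β = specA β α := by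
  unfold specA
  rw [add_comm α β, mul_comm α β, mul_comm (α ^ 2 + 1)]

theorem specA_neg (α β : ℝ) : specA (-α) (-β) = - specA α β := by
  unfold specA
  have e : -α + -β = -(α + β) := by ring
  by_cases h : α + β = 0
  · rw [if_pos h, if_pos (by rw [e, h, neg_zero])]; simp
  · rw [if_neg h, if_neg (by rw [e]; exact neg_ne_zero.mpr h), e, div_neg]
    simp

theorem specA_self (α : ℝ) : specA α α = α := by
  unfold specA
  split_ifs with h
  · linarith
  · rw [Real.sqrt_mul_self (by positivity), div_eq_iff h]; ring

theorem le_specA_of_le {α β : ℝ} (h : α ≤ β) : α ≤ specA α β := by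
  unfold specA
  split_ifs with h0
  · linarith
  · rcases lt_or_gt_of_ne h0 with h1 | h1
    · rw [le_div_iff_of_neg h1]
      have : Real.sqrt ((α ^ 2 + 1) * (β ^ 2 + 1)) ≤ α ^ 2 + 1 := by
        apply Real.sqrt_le_iff.mpr
        refine ⟨by positivity, ?_⟩
        have : β ^ 2 ≤ α ^ 2 := by nlinarith
        rw [sq (α ^ 2 + 1)]
        gcongr
      nlinarith
    · rw [le_div_iff₀ h1]
      have : α ^ 2 + 1 ≤ Real.sqrt ((α ^ 2 + 1) * (β ^ 2 + 1)) := by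
        apply Real.le_sqrt_of_sq_le
        have : α ^ 2 ≤ β ^ 2 := by nlinarith
        rw [sq (α ^ 2 + 1)]
        gcongr
      nlinarith

theorem lt_or_lt_of_specA_lt {α β M : ℝ} (h : specA α β < M) : α < M ∨ β < M := by
  rcases le_total α β with h1 | h1
  · exact Or.inl ((le_specA_of_le h1).trans_lt h)
  · rw [specA_comm] at h
    exact Or.inr ((le_specA_of_le h1).trans_lt h)

theorem countable_local_min_values (h : ℝ → ℝ) :
    {c : ℝ | ∃ p q : ℚ, IsLeast (Set.image h (Ioo (p : ℝ) q)) c}.Countable := by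
  have : {c : ℝ | ∃ p q : ℚ, IsLeast (Set.image h (Ioo (p : ℝ) q)) c}
      = ⋃ p : ℚ, ⋃ q : ℚ, {c | IsLeast (Set.image h (Ioo (p : ℝ) q)) c} := by
    ext c; simp
  rw [this]
  refine countable_iUnion fun p => countable_iUnion fun q => Set.Subsingleton.countable ?_
  intro c hc d hd
  exact IsLeast.unique hc hd

theorem antitone_of_one_sided (h : ℝ → ℝ) (x y : ℝ) (hxy : x ≤ y)
    (hc : ContinuousOn h (Icc x y))
    (hd : ∀ t ∈ Ioo x y, (∀ᶠ u in 𝓝[>] t, h u < h t) ∨ (∀ᶠ u in 𝓝[<] t, h t < h u)) :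
    h y ≤ h x := by
  by_contra! hlt
  obtain ⟨c, hcI, hcn⟩ : ∃ c ∈ Ioo (h x) (h y),
      c ∉ {c : ℝ | ∃ p q : ℚ, IsLeast (Set.image h (Ioo (p : ℝ) q)) c} := by
    by_contra! hcon
    have h1 : (Ioo (h x) (h y)).Countable := (countable_local_min_values h).mono hcon
    have := Cardinal.mk_Ioo_real hlt
    have h2 := h1.le_aleph0
    rw [this] at h2
    exact absurd h2 (not_le.mpr Cardinal.aleph0_lt_continuum)
  apply hcn
  have hcomp : IsCompact (Icc x y ∩ Set.preimage h (Iic c)) :=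
    isCompact_Icc.of_isClosed_subset (hc.preimage_isClosed_of_isClosed isClosed_Icc isClosed_Iic)
      inter_subset_left
  obtain ⟨s, hs, hmax⟩ := hcomp.exists_isGreatest ⟨x, ⟨le_refl x, hxy⟩, hcI.1.le⟩
  have hsc : h s ≤ c := hs.2
  have hsy : s < y := by
    refine lt_of_le_of_ne hs.1.2 ?_
    rintro rfl
    exact absurd hcI.2 (not_lt.mpr hsc)
  have hgt : ∀ t, s < t → t ≤ y → c < h t := by
    intro t h1 h2
    by_contra! h3
    exact absurd (hmax ⟨⟨hs.1.1.trans h1.le, h2⟩, h3⟩) (not_le.mpr h1)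
  have hse : h s = c := by
    apply le_antisymm hsc
    have h1 : Tendsto h (𝓝[>] s) (𝓝 (h s)) :=
      ((hc s hs.1).mono_of_mem_nhdsWithin (mem_of_superset (Ioc_mem_nhdsGT hsy)
        (fun t ht => ⟨hs.1.1.trans ht.1.le, ht.2⟩)))
    refine ge_of_tendsto h1 ?_
    filter_upwards [Ioc_mem_nhdsGT hsy] with t ht
    exact (hgt t ht.1 ht.2).le
  have hxs : x < s := by
    refine lt_of_le_of_ne hs.1.1 ?_
    rintro rfl
    exact absurd hcI.1 (not_lt.mpr hse.ge)
  rcases hd s ⟨hxs, hsy⟩ with h1 | h1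
  · exfalso
    obtain ⟨t, ht1, ht2⟩ := (h1.and (Ioc_mem_nhdsGT hsy)).exists
    have := hgt t ht2.1 ht2.2
    linarith
  · obtain ⟨l, hl, hl2⟩ := (mem_nhdsLT_iff_exists_Ioo_subset).1 h1
    obtain ⟨p, hp1, hp2⟩ := exists_rat_btwn (show l < s from hl)
    obtain ⟨q, hq1, hq2⟩ := exists_rat_btwn hsy
    refine ⟨p, q, ⟨s, ⟨hp2, hq1⟩, hse⟩, ?_⟩
    rintro _ ⟨t, ht, rfl⟩
    rcases lt_trichotomy t s with h2 | h2 | h2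
    · have : h s < h t := hl2 ⟨hp1.trans ht.1, h2⟩
      linarith
    · rw [h2, hse]
    · exact (hgt t h2 (ht.2.trans hq2).le).le

theorem sub_le_of_specA_lt (f : ℝ → ℝ) (x y M : ℝ) (hxy : x ≤ y)
    (hc : ContinuousOn f (Icc x y))
    (hd : ∀ t ∈ Ioo x y, ∃ α β, SpecOneSided f t α β ∧ specA α β < M) :
    f y - f x ≤ M * (y - x) := by
  have := antitone_of_one_sided (fun t => f t - M * t) x y hxy (by fun_prop) ?_
  · linarith
  intro t ht
  obtain ⟨α, β, ⟨hα, hβ⟩, hlt⟩ := hd t ht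
  rcases lt_or_lt_of_specA_lt hlt with h1 | h1
  · left
    filter_upwards [hα.eventually (gt_mem_nhds h1), self_mem_nhdsWithin] with u hu hut
    have : 0 < u - t := sub_pos.mpr hut
    rw [div_lt_iff₀ this] at hu
    linarith
  · right
    filter_upwards [hβ.eventually (gt_mem_nhds h1), self_mem_nhdsWithin] with u hu hut
    have : u - t < 0 := sub_neg.mpr hut
    rw [div_lt_iff_of_neg this] at hu
    linarith

theorem one_sided_le (f g : ℝ → ℝ) (a b x L α β : ℝ) (hx : x ∈ Ioo a b)
    (hc : ContinuousOn f (Ioo a b))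
    (hd : ∀ t ∈ Ioo a b, ∃ α β, SpecOneSided f t α β ∧ g t = specA α β)
    (hl : Tendsto g (𝓝[<] x) (𝓝 L)) (hr : Tendsto g (𝓝[>] x) (𝓝 L))
    (h : SpecOneSided f x α β) : α ≤ L ∧ β ≤ L := by
  constructor
  · refine le_of_forall_gt_imp_ge_of_dense fun M hM => ?_
    obtain ⟨r, hr1, hr2⟩ := (mem_nhdsGT_iff_exists_Ioo_subset).1 (hr.eventually (gt_mem_nhds hM))
    refine le_of_tendsto h.1 ?_
    filter_upwards [Ioo_mem_nhdsGT hr1, Ioo_mem_nhdsGT hx.2] with y hy1 hy2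
    rw [div_le_iff₀ (sub_pos.mpr hy1.1)]
    refine sub_le_of_specA_lt f x y M hy1.1.le
      (hc.mono fun t ht => ⟨hx.1.trans_le ht.1, ht.2.trans_lt hy2.2⟩) ?_
    intro t ht
    obtain ⟨α', β', h1, h2⟩ := hd t ⟨hx.1.trans ht.1, ht.2.trans hy2.2⟩
    exact ⟨α', β', h1, h2 ▸ hr2 ⟨ht.1, ht.2.trans hy1.2⟩⟩
  · refine le_of_forall_gt_imp_ge_of_dense fun M hM => ?_
    obtain ⟨r, hr1, hr2⟩ := (mem_nhdsLT_iff_exists_Ioo_subset).1 (hl.eventually (gt_mem_nhds hM))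
    refine le_of_tendsto h.2 ?_
    filter_upwards [Ioo_mem_nhdsLT hr1, Ioo_mem_nhdsLT hx.1] with y hy1 hy2
    rw [div_le_iff_of_neg (sub_neg.mpr hy1.2)]
    have := sub_le_of_specA_lt f y x M hy1.2.le
      (hc.mono fun t ht => ⟨hy2.1.trans_le ht.1, ht.2.trans_lt hx.2⟩) ?_
    · linarith
    intro t ht
    obtain ⟨α', β', h1, h2⟩ := hd t ⟨hy2.1.trans ht.1, ht.2.trans hx.2⟩
    exact ⟨α', β', h1, h2 ▸ hr2 ⟨hy1.1.trans ht.1, ht.2⟩⟩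

theorem SpecOneSided.neg {f : ℝ → ℝ} {x α β : ℝ} (h : SpecOneSided f x α β) :
    SpecOneSided (fun t => - f t) x (-α) (-β) := by
  have e : (fun y => (- f y - - f x) / (y - x)) = fun y => -((f y - f x) / (y - x)) := by
    funext y; ring
  unfold SpecOneSided
  rw [e]
  exact ⟨h.1.neg, h.2.neg⟩

theorem continuous_specular_deriv_of_second_order (f g : ℝ → ℝ) (a b : ℝ)
    (hcont : ContinuousOn f (Set.Ioo a b))
    (hspec : ∀ x ∈ Set.Ioo a b, HasSpecDerivAt f x (g x))
    (hspec2 : ∀ x ∈ Set.Ioo a b, SpecDifferentiableAt g x) :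
    ContinuousOn g (Set.Ioo a b) := by
  have hd : ∀ t ∈ Ioo a b, ∃ α β, SpecOneSided f t α β ∧ g t = specA α β := by
    intro t ht
    obtain ⟨L, α, β, ⟨h1, h2, h3, h4⟩, h5⟩ := hspec t ht
    have hct : ContinuousAt f t := hcont.continuousAt (isOpen_Ioo.mem_nhds ht)
    have : L = f t := tendsto_nhds_unique h2 (hct.tendsto.mono_left nhdsWithin_le_nhds)
    subst this
    exact ⟨α, β, ⟨h3, h4⟩, h5⟩
  intro x hx
  obtain ⟨L, _, _, hl, hr, -, -⟩ := hspec2 x hx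
  obtain ⟨α, β, h1, h2⟩ := hd x hx
  have hu := one_sided_le f g a b x L α β hx hcont hd hl hr h1
  have hlo := one_sided_le (fun t => - f t) (fun t => - g t) a b x (-L) (-α) (-β) hx hcont.neg
    (by
      intro t ht
      obtain ⟨α, β, h1, h2⟩ := hd t ht
      exact ⟨-α, -β, h1.neg, by rw [specA_neg, h2]⟩) hl.neg hr.neg h1.neg
  have hα : α = L := le_antisymm hu.1 (neg_le_neg_iff.mp hlo.1)
  have hβ : β = L := le_antisymm hu.2 (neg_le_neg_iff.mp hlo.2)
  rw [hα, hβ, specA_self] at h2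
  rw [← h2] at hl hr
  exact (continuousAt_iff_continuous_left'_right'.mpr ⟨hl, hr⟩).continuousWithinAt
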